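/- Let f, g ∈ ℤ[T, T⁻¹] be nonzero Laurent polynomials with integer coefficients. Then the set of integers k such that the Laurent polynomial h = f + T^k · g has NO internal gap of length two — that is, such that there is no integer i with coeff_i(h) = 0, coeff_{i+1}(h) = 0, and elements a, b of the support of h satisfying a < i and i + 1 < b — is a finite set of integers. -/

import Mathlib

open LaurentPolynomial

lemma coeff_shift_aux (f g : LaurentPolynomial ℤ) (k i : ℤ) :
    (f + T k * g : LaurentPolynomial ℤ).coeff i = f.coeff i + g.coeff (i - k) := by
  have h : (T k * g : LaurentPolynomial ℤ).coeff i = g.coeff (i - k) := by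
    have := AddMonoidAlgebra.coeff_single_mul_apply g (1 : ℤ) k i
    rw [T, this, one_mul]
    congr 1
    ring
  rw [← h]
  simp

lemma exists_bound_aux (f : LaurentPolynomial ℤ) :
    ∃ N : ℤ, ∀ i, f.coeff i ≠ 0 → -N ≤ i ∧ i ≤ N := by
  refine ⟨∑ j ∈ f.coeff.support, |j|, fun i hi => ?_⟩
  have := Finset.single_le_sum (f := fun j : ℤ => |j|) (fun j _ => abs_nonneg j)
    (Finsupp.mem_support_iff.mpr hi)
  exact abs_le.mp this

lemma exists_coeff_aux (f : LaurentPolynomial ℤ) (hf : f ≠ 0) : ∃ a, f.coeff a ≠ 0 := by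
  by_contra! h
  exact hf (LaurentPolynomial.ext (fun a => by simp [h a]))

/-- For nonzero integer Laurent polynomials `f, g`, there are only finitely
many integers `k` such that `h = f + T^k * g` has no internal gap of two
consecutive vanishing coefficients (i.e. no `i` with `h i = 0`, `h (i+1) = 0`,
and support elements of `h` strictly on both sides of `{i, i+1}`). -/
theorem finite_shifts_without_gap
    (f g : LaurentPolynomial ℤ) (hf : f ≠ 0) (hg : g ≠ 0) :
    {k : ℤ | ¬ ∃ i : ℤ,
        ((f + T k * g : LaurentPolynomial ℤ)).coeff i = 0 ∧
        ((f + T k * g : LaurentPolynomial ℤ)).coeff (i + 1) = 0 ∧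
        (∃ a ∈ (f + T k * g : LaurentPolynomial ℤ).coeff.support, a < i) ∧
        (∃ b ∈ (f + T k * g : LaurentPolynomial ℤ).coeff.support, i + 1 < b)}.Finite := by
  obtain ⟨M, hM⟩ := exists_bound_aux f
  obtain ⟨N, hN⟩ := exists_bound_aux g
  obtain ⟨a, ha⟩ := exists_coeff_aux f hf
  obtain ⟨b, hb⟩ := exists_coeff_aux g hg
  have hMa := hM a ha
  have hNb := hN b hb
  have hM0 : ∀ i, (i < -M ∨ M < i) → f.coeff i = 0 := by
    intro i hi
    by_contra h
    have := hM i h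
    omega
  have hN0 : ∀ i, (i < -N ∨ N < i) → g.coeff i = 0 := by
    intro i hi
    by_contra h
    have := hN i h
    omega
  refine (Set.finite_Icc (-(M + N + 3)) (M + N + 3)).subset ?_
  intro k hk
  by_contra hk'
  apply hk
  simp only [Finsupp.mem_support_iff, coeff_shift_aux]
  rw [Set.mem_Icc, not_and_or, not_le, not_le] at hk'
  rcases hk' with h | h
  · refine ⟨-M - 2, ?_, ?_, ⟨b + k, ?_, by omega⟩, ⟨a, ?_, by omega⟩⟩
    · rw [hM0 _ (by omega), hN0 _ (by omega), add_zero]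
    · rw [hM0 _ (by omega), hN0 _ (by omega), add_zero]
    · rw [hM0 _ (by omega), zero_add, add_sub_cancel_right]
      exact hb
    · rw [hN0 _ (by omega), add_zero]
      exact ha
  · refine ⟨M + 1, ?_, ?_, ⟨a, ?_, by omega⟩, ⟨b + k, ?_, by omega⟩⟩
    · rw [hM0 _ (by omega), hN0 _ (by omega), add_zero]
    · rw [hM0 _ (by omega), hN0 _ (by omega), add_zero]
    · rw [hN0 _ (by omega), add_zero]
      exact ha
    · rw [hM0 _ (by omega), zero_add, add_sub_cancel_right]
      exact hb
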